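/- Let n ≥ 1 and N ≥ 1 be integers and let W = (w_{ij}) be a random n×n orthogonal matrix distributed according to the Haar probability measure on O(n). Then there exists a constant C_N > 0 depending only on N such that for any (not necessarily distinct) pairs (i₁,j₁), …, (i_N,j_N) ∈ {1, …, n}², the expectation of the product of the corresponding entries satisfies | E[ w_{i₁ j₁} w_{i₂ j₂} ⋯ w_{i_N j_N} ] | ≤ C_N · n^{-N/2}. -/

import Mathlib

/-!
A column `x` of a Haar orthogonal matrix is a random unit vector whose law is invariant under
`O(n)`, so `E |⟨a, x⟩|^N` is the same for every unit vector `a`. Taking `a = e_i` gives the moment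
of a single entry; taking `a = ε / √n` for each sign vector `ε` and averaging over `ε` gives
`n^{-N/2} E_x E_ε |⟨ε, x⟩|^N`. For a fixed unit vector `x` the inner average is bounded by a
constant depending only on `N` (a Khintchine inequality, `khintchine`): `|y|^N ≤ N! (e^y + e^{-y})`,
and `E_ε e^{⟨ε, x⟩} = ∏ cosh x_i ≤ e^{1/2}`. Hence `E |w_ij|^N ≤ C n^{-N/2}` (`entry_moment`).
A product of `N` entries is dominated by the sum of the `N`-th powers of their absolute values.
-/

open MeasureTheory ProbabilityTheory

/-- Matrices over ℝ carry the product measurable structure (entrywise). -/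
instance matrixMeasurableSpace (m n : Type*) : MeasurableSpace (Matrix m n ℝ) :=
  inferInstanceAs (MeasurableSpace (m → n → ℝ))

/-- The Hilbert--Schmidt norm of a real square matrix. -/
noncomputable def hsNorm {n : ℕ} (A : Matrix (Fin n) (Fin n) ℝ) : ℝ :=
  Real.sqrt (∑ i, ∑ j, (A i j) ^ 2)

/-- The sign `±1` encoded by a Boolean. -/
def boolSign (b : Bool) : ℝ := if b then 1 else -1

lemma boolSign_sq (b : Bool) : boolSign b ^ 2 = 1 := by cases b <;> simp [boolSign]

/-- The exponential moment of a Rademacher sum; `c = ±1` in applications. -/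
lemma sum_exp_le {n : ℕ} (x : Fin n → ℝ) (hx : ∑ i, x i ^ 2 = 1) (c : ℝ) (hc : c ^ 2 = 1) :
    ∑ ε : Fin n → Bool, Real.exp (c * ∑ i, boolSign (ε i) * x i) ≤
      2 ^ n * Real.exp (1 / 2) := by
  have h1 : ∑ ε : Fin n → Bool, Real.exp (c * ∑ i, boolSign (ε i) * x i) =
      ∏ i, ∑ b : Bool, Real.exp (c * (boolSign b * x i)) := by
    rw [Fintype.prod_sum]
    refine Finset.sum_congr rfl fun ε _ => ?_
    rw [Finset.mul_sum, Real.exp_sum]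
  have h2 : ∀ i, ∑ b : Bool, Real.exp (c * (boolSign b * x i)) = 2 * Real.cosh (c * x i) := by
    intro i
    simp [boolSign, Real.cosh_eq]
    ring
  have h3 : ∏ i, Real.cosh (c * x i) ≤ Real.exp (1 / 2) := by
    calc ∏ i, Real.cosh (c * x i) ≤ ∏ i, Real.exp ((c * x i) ^ 2 / 2) :=
          Finset.prod_le_prod (fun i _ => (Real.cosh_pos _).le)
            fun i _ => Real.cosh_le_exp_half_sq _
      _ = Real.exp (1 / 2) := by
          rw [← Real.exp_sum, ← Finset.sum_div]
          simp_rw [mul_pow, hc, one_mul]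
          rw [hx]
  rw [h1, Finset.prod_congr rfl fun i _ => h2 i, Finset.prod_mul_distrib]
  simp only [Finset.prod_const, Finset.card_univ, Fintype.card_fin]
  gcongr

/-- Khintchine inequality, with the average over signs written as a sum over `2 ^ n` vectors. -/
lemma khintchine {n : ℕ} (N : ℕ) (x : Fin n → ℝ) (hx : ∑ i, x i ^ 2 = 1) :
    ∑ ε : Fin n → Bool, |∑ i, boolSign (ε i) * x i| ^ N ≤
      2 ^ n * (2 * N.factorial * Real.exp (1 / 2)) := by
  have key : ∀ y : ℝ, |y| ^ N ≤ N.factorial * (Real.exp (1 * y) + Real.exp ((-1) * y)) := by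
    intro y
    have hf : (0 : ℝ) < N.factorial := by positivity
    have h := Real.pow_div_factorial_le_exp |y| (abs_nonneg y) N
    rw [div_le_iff₀ hf] at h
    have h' : Real.exp |y| ≤ Real.exp (1 * y) + Real.exp ((-1) * y) := by
      rcases abs_choice y with hy | hy <;> rw [hy]
      · simp [Real.exp_nonneg]
      · simp [Real.exp_nonneg]
    nlinarith
  calc _ ≤ ∑ ε : Fin n → Bool, (N.factorial : ℝ) *
        (Real.exp (1 * ∑ i, boolSign (ε i) * x i) +
          Real.exp ((-1) * ∑ i, boolSign (ε i) * x i)) :=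
        Finset.sum_le_sum fun ε _ => key _
    _ = N.factorial * (∑ ε : Fin n → Bool, Real.exp (1 * ∑ i, boolSign (ε i) * x i) +
          ∑ ε : Fin n → Bool, Real.exp ((-1) * ∑ i, boolSign (ε i) * x i)) := by
        rw [← Finset.mul_sum, Finset.sum_add_distrib]
    _ ≤ N.factorial * (2 ^ n * Real.exp (1 / 2) + 2 ^ n * Real.exp (1 / 2)) := by
        gcongr
        · exact sum_exp_le x hx 1 (by norm_num)
        · exact sum_exp_le x hx (-1) (by norm_num)
    _ = _ := by ring

/-- Any unit vector is the `i`-th row of some orthogonal matrix. -/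
lemma exists_orthogonal_row {n : ℕ} (i : Fin n) (a : Fin n → ℝ) (ha : ∑ k, a k ^ 2 = 1) :
    ∃ g : Matrix.orthogonalGroup (Fin n) ℝ,
      ∀ k, (g : Matrix (Fin n) (Fin n) ℝ) i k = a k := by
  have hon : Orthonormal ℝ (({i} : Set (Fin n)).domRestrict
      (fun _ => (WithLp.toLp 2 a : EuclideanSpace ℝ (Fin n)))) := by
    constructor
    · intro _
      simp [EuclideanSpace.norm_eq, Set.domRestrict, ha]
    · intro p q hpq
      exact absurd (Subsingleton.elim p q) hpq
  obtain ⟨b, hb⟩ := hon.exists_orthonormalBasis_extension_of_card_eq (by simp)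
  refine ⟨⟨Matrix.of fun p q => b p q, ?_⟩, fun k => ?_⟩
  · rw [Matrix.mem_orthogonalGroup_iff]
    ext p q
    have h := orthonormal_iff_ite.mp b.orthonormal p q
    simp only [Matrix.mul_apply, Matrix.of_apply, Matrix.one_apply]
    rw [← h, PiLp.inner_apply]
    simp [mul_comm]
  · simp [hb i rfl]

section Moments

variable {n : ℕ}

lemma measurable_entry (i j : Fin n) :
    Measurable fun W : Matrix.orthogonalGroup (Fin n) ℝ =>
      (W : Matrix (Fin n) (Fin n) ℝ) i j :=
  (measurable_pi_apply j).comp ((measurable_pi_apply i).comp measurable_subtype_coe)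

lemma column_sq_sum (W : Matrix.orthogonalGroup (Fin n) ℝ) (j : Fin n) :
    ∑ k, (W : Matrix (Fin n) (Fin n) ℝ) k j ^ 2 = 1 := by
  have h := congrFun (congrFun ((Matrix.mem_orthogonalGroup_iff' (Fin n) ℝ).mp W.2) j) j
  simpa [Matrix.mul_apply, sq] using h

lemma abs_entry_le_one (W : Matrix.orthogonalGroup (Fin n) ℝ) (i j : Fin n) :
    |(W : Matrix (Fin n) (Fin n) ℝ) i j| ≤ 1 := by
  rw [← sq_le_one_iff_abs_le_one, ← column_sq_sum W j]
  exact Finset.single_le_sum (f := fun k => (W : Matrix (Fin n) (Fin n) ℝ) k j ^ 2)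
    (fun k _ => sq_nonneg _) (Finset.mem_univ i)

variable (μ : Measure (Matrix.orthogonalGroup (Fin n) ℝ))

lemma integrable_entry_pow [IsFiniteMeasure μ] (N : ℕ) (i j : Fin n) :
    Integrable (fun W : Matrix.orthogonalGroup (Fin n) ℝ =>
      |(W : Matrix (Fin n) (Fin n) ℝ) i j| ^ N) μ := by
  refine Integrable.of_bound (C := 1)
    ((measurable_entry i j).abs.pow_const N).aestronglyMeasurable (ae_of_all _ fun W => ?_)
  rw [Real.norm_eq_abs, abs_pow, abs_abs]
  exact pow_le_one₀ (abs_nonneg _) (abs_entry_le_one W i j)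

lemma measurable_left_mul (g : Matrix.orthogonalGroup (Fin n) ℝ) :
    Measurable fun W : Matrix.orthogonalGroup (Fin n) ℝ => g * W := by
  refine Measurable.subtype_mk (f := fun W : Matrix.orthogonalGroup (Fin n) ℝ =>
    (g : Matrix (Fin n) (Fin n) ℝ) * (W : Matrix (Fin n) (Fin n) ℝ)) ?_
  refine measurable_pi_lambda _ fun i => measurable_pi_lambda _ fun j => ?_
  simp only [Matrix.mul_apply]
  exact Finset.measurable_fun_sum _ fun k _ => (measurable_entry k j).const_mul _

/-- Invariance of the law of a column, applied to an orthogonal matrix with `i`-th row `a`. The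
integrability of the left-hand integrand is recorded for later summation. -/
lemma moment_eq [IsFiniteMeasure μ] [μ.IsMulLeftInvariant] (N : ℕ) (i j : Fin n)
    (a : Fin n → ℝ) (ha : ∑ k, a k ^ 2 = 1) :
    Integrable (fun W : Matrix.orthogonalGroup (Fin n) ℝ =>
        |∑ k, a k * (W : Matrix (Fin n) (Fin n) ℝ) k j| ^ N) μ ∧
      ∫ W, |∑ k, a k * (W : Matrix (Fin n) (Fin n) ℝ) k j| ^ N ∂μ =
        ∫ W, |(W : Matrix (Fin n) (Fin n) ℝ) i j| ^ N ∂μ := by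
  obtain ⟨g, hg⟩ := exists_orthogonal_row i a ha
  have hmap : MeasurePreserving (fun W => g * W) μ μ :=
    ⟨measurable_left_mul g, Measure.IsMulLeftInvariant.map_mul_left_eq_self g⟩
  have hfun : (fun W : Matrix.orthogonalGroup (Fin n) ℝ =>
      |∑ k, a k * (W : Matrix (Fin n) (Fin n) ℝ) k j| ^ N) =
      (fun W : Matrix.orthogonalGroup (Fin n) ℝ =>
        |(W : Matrix (Fin n) (Fin n) ℝ) i j| ^ N) ∘ fun W => g * W := by
    funext W
    simp [Matrix.mul_apply, hg]
  have hint := integrable_entry_pow μ N i j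
  rw [hfun]
  refine ⟨hmap.integrable_comp_of_integrable hint, ?_⟩
  have h := integral_map (μ := μ) (measurable_left_mul g).aemeasurable
    (f := fun W : Matrix.orthogonalGroup (Fin n) ℝ =>
      |(W : Matrix (Fin n) (Fin n) ℝ) i j| ^ N)
    (by rw [hmap.map_eq]; exact hint.aestronglyMeasurable)
  rw [hmap.map_eq] at h
  exact h.symm

lemma entry_moment [IsProbabilityMeasure μ] [μ.IsMulLeftInvariant] (hn : 1 ≤ n) (N : ℕ)
    (i j : Fin n) :
    ∫ W, |(W : Matrix (Fin n) (Fin n) ℝ) i j| ^ N ∂μ ≤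
      (2 * N.factorial * Real.exp (1 / 2)) * (n : ℝ) ^ (-(N : ℝ) / 2) := by
  set M := ∫ W, |(W : Matrix (Fin n) (Fin n) ℝ) i j| ^ N ∂μ with hM
  have hn0 : (0 : ℝ) < n := by exact_mod_cast hn
  set s : ℝ := (Real.sqrt n)⁻¹ with hs
  have hs0 : 0 < s := by positivity
  have hs2 : s ^ 2 = (n : ℝ)⁻¹ := by rw [hs, inv_pow, Real.sq_sqrt hn0.le]
  have hsN : s ^ N = (n : ℝ) ^ (-(N : ℝ) / 2) := by
    rw [hs, Real.sqrt_eq_rpow, ← Real.rpow_neg hn0.le, ← Real.rpow_natCast,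
      ← Real.rpow_mul hn0.le]
    congr 1
    ring
  have hunit : ∀ ε : Fin n → Bool, ∑ k, (s * boolSign (ε k)) ^ 2 = 1 := by
    intro ε
    simp [mul_pow, boolSign_sq, hs2, hn0.ne']
  have hpt : ∀ W : Matrix.orthogonalGroup (Fin n) ℝ,
      ∑ ε : Fin n → Bool, |∑ k, s * boolSign (ε k) * (W : Matrix (Fin n) (Fin n) ℝ) k j| ^ N ≤
        2 ^ n * (2 * N.factorial * Real.exp (1 / 2)) * s ^ N := by
    intro W
    have h := khintchine N (fun k => (W : Matrix (Fin n) (Fin n) ℝ) k j) (column_sq_sum W j)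
    calc _ = (∑ ε : Fin n → Bool,
          |∑ k, boolSign (ε k) * (W : Matrix (Fin n) (Fin n) ℝ) k j| ^ N) * s ^ N := by
          rw [Finset.sum_mul]
          refine Finset.sum_congr rfl fun ε _ => ?_
          simp_rw [mul_assoc]
          rw [← Finset.mul_sum, abs_mul, abs_of_pos hs0, mul_pow, mul_comm]
      _ ≤ _ := by gcongr
  have hsum : (2 : ℝ) ^ n * M = ∫ W, ∑ ε : Fin n → Bool,
      |∑ k, s * boolSign (ε k) * (W : Matrix (Fin n) (Fin n) ℝ) k j| ^ N ∂μ := by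
    rw [integral_finsetSum _ fun ε _ => (moment_eq μ N i j _ (hunit ε)).1,
      Finset.sum_congr rfl fun ε _ => (moment_eq μ N i j _ (hunit ε)).2]
    simp [hM]
  have hle : (2 : ℝ) ^ n * M ≤ 2 ^ n * (2 * N.factorial * Real.exp (1 / 2)) * s ^ N := by
    rw [hsum]
    refine (integral_mono
      (integrable_finsetSum _ fun ε _ => (moment_eq μ N i j _ (hunit ε)).1)
      (integrable_const _) hpt).trans ?_
    simp
  rw [← hsN]
  rw [mul_assoc] at hle
  exact le_of_mul_le_mul_left hle (by positivity)

end Moments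

/-- Bounding each factor by the largest one. -/
lemma abs_prod_le_sum_pow {N : ℕ} (hN : 1 ≤ N) (y : Fin N → ℝ) :
    |∏ l, y l| ≤ ∑ l, |y l| ^ N := by
  have : Nonempty (Fin N) := ⟨⟨0, hN⟩⟩
  obtain ⟨m, hm⟩ := Finite.exists_max fun l => |y l|
  rw [Finset.abs_prod]
  calc ∏ l, |y l| ≤ ∏ _l : Fin N, |y m| :=
        Finset.prod_le_prod (fun l _ => abs_nonneg _) fun l _ => hm l
    _ = |y m| ^ N := by simp
    _ ≤ _ := Finset.single_le_sum (f := fun l => |y l| ^ N)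
        (fun l _ => by positivity) (Finset.mem_univ m)

/-- Bound on the expectation of a product of `N` (not necessarily distinct) entries of a
Haar-distributed orthogonal matrix. -/
theorem haar_entries_product_moment (N : ℕ) (hN : 1 ≤ N) :
    ∃ C : ℝ, 0 < C ∧ ∀ n : ℕ, 1 ≤ n →
      ∀ μ : Measure (Matrix.orthogonalGroup (Fin n) ℝ),
        μ.IsHaarMeasure → IsProbabilityMeasure μ →
      ∀ idx : Fin N → Fin n × Fin n,
        |∫ W, ∏ ℓ, (W : Matrix (Fin n) (Fin n) ℝ) (idx ℓ).1 (idx ℓ).2 ∂μ| ≤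
          C * (n : ℝ) ^ (-(N : ℝ) / 2) := by
  have hN0 : (0 : ℝ) < N := by exact_mod_cast hN
  refine ⟨N * (2 * N.factorial * Real.exp (1 / 2)), by positivity, ?_⟩
  intro n hn μ hμ hp idx
  have hint : ∀ l ∈ (Finset.univ : Finset (Fin N)),
      Integrable (fun W : Matrix.orthogonalGroup (Fin n) ℝ =>
        |(W : Matrix (Fin n) (Fin n) ℝ) (idx l).1 (idx l).2| ^ N) μ :=
    fun l _ => integrable_entry_pow μ N _ _
  calc _ ≤ ∫ W, ∑ l, |(W : Matrix (Fin n) (Fin n) ℝ) (idx l).1 (idx l).2| ^ N ∂μ := by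
        rw [← Real.norm_eq_abs]
        refine norm_integral_le_of_norm_le (integrable_finsetSum _ hint)
          (ae_of_all _ fun W => ?_)
        exact abs_prod_le_sum_pow hN _
    _ = ∑ l, ∫ W, |(W : Matrix (Fin n) (Fin n) ℝ) (idx l).1 (idx l).2| ^ N ∂μ :=
        integral_finsetSum _ hint
    _ ≤ ∑ _l : Fin N, (2 * N.factorial * Real.exp (1 / 2)) * (n : ℝ) ^ (-(N : ℝ) / 2) :=
        Finset.sum_le_sum fun l _ => entry_moment μ hn N _ _
    _ = _ := by simp; ring
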